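/- (Lemma 2) In the scheduling model with common chunk size X > 0 and any weight β ≥ 1, the backward greedy selection G maximizes the geometrically weighted sum of fetched chunk sizes: for every feasible set S ⊆ {1,…,C}, Σ_{i∈S} β^i · X ≤ Σ_{i∈G} β^i · X. -/

import Mathlib

/-!
Feasibility of a set `S` of equal-size chunks is equivalent to a family of counting bounds on
index intervals. Write `P τ` for the bandwidth of the slots `1, …, τ` and `K = ⌊Bm / L⌋`. Then `S`
is feasible iff for all `τ ≤ σ`

* `X * #{i ∈ S | τ < t i, d i ≤ σ} ≤ P σ - P τ`, and
* `X * #{i ∈ S | τ < d i ≤ σ} ≤ P σ - P τ + K * X`.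

Necessity (`intervalBounds_of_feasible`) is a count of the work done in the slots `τ+1, …, σ`: in
the second bound at most `K` of the chunks counted are already started at time `τ`. For sufficiency
(`feasible_of_intervalBounds`) the chunks are served in reversed time, in decreasing order of index
and without idling. The work `W τ` which this policy does in the slots after `τ` is given by the
usual formula for a queue, and the two bounds say exactly that `W` is large enough for the release
times `t` and for the buffer. For the buffer it matters that `K` is an integer and that chunks
are served one after the other, so that at most one chunk is partially downloaded.

As `t` and `d` are monotone, the index sets counted in the bounds are intervals. Suppose `S` is
feasible and agrees with the greedy selection `G` above `i`, while `i ∈ G \ S`. Then `i` can be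
exchanged for the largest `k ∈ S` below `i` (`card_filter_exchange`): an interval which contains
both `i` and `k` has the same count as before, and one which contains `i` but not `k` sees only
elements of `G`. Since `β ≥ 1`, the exchange does not decrease the weight, and iterating it from
`C` down to `1` turns `S` into `G`.
-/

open scoped Classical

structure SchedModel where
  C : ℕ
  hC : 1 ≤ C
  L : ℝ
  hL : 0 < L
  B : ℕ → ℝ
  hB : ∀ j, 0 ≤ B j
  t : ℕ → ℕ
  d : ℕ → ℕ
  ht : ∀ i, 1 ≤ t i
  htd : ∀ i, t i ≤ d i
  tmono : Monotone t
  dmono : Monotone d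
  Bm : ℝ
  hBm : 0 < Bm

/-- A feasible schedule for per-chunk download amounts `X`. -/
def SchedModel.IsSchedule (M : SchedModel) (X : ℕ → ℝ) (z : ℕ → ℕ → ℝ) : Prop :=
  (∀ i j, 0 ≤ z i j) ∧
  (∀ i j, (j < M.t i ∨ M.d i < j) → z i j = 0) ∧
  (∀ i ∈ Finset.Icc 1 M.C, ∑ j ∈ Finset.Icc 1 (M.d i), z i j = X i) ∧
  (∀ j, ∑ i ∈ Finset.Icc 1 M.C, z i j ≤ M.B j) ∧
  (∀ τ, M.L * (((Finset.Icc 1 M.C).filter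
      (fun i => τ < M.d i ∧ 0 < ∑ j ∈ Finset.Icc 1 τ, z i j)).card : ℝ) ≤ M.Bm)

/-- With common chunk size `X`, a set `S` of chunks is feasible if there is a
schedule downloading amount `X` for every chunk in `S` and `0` otherwise. -/
def SchedModel.FeasibleSet (M : SchedModel) (X : ℝ) (S : Finset ℕ) : Prop :=
  ∃ z : ℕ → ℕ → ℝ, M.IsSchedule (fun i => if i ∈ S then X else 0) z

/-- Backward greedy selection after processing the `k` chunks `C, C−1, …, C−k+1`:
a chunk is added iff the selection so far together with it is feasible. -/
noncomputable def SchedModel.backGreedyAux (M : SchedModel) (X : ℝ) : ℕ → Finset ℕ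
  | 0 => ∅
  | k + 1 =>
    let G := M.backGreedyAux X k
    if M.FeasibleSet X (insert (M.C - k) G) then insert (M.C - k) G else G

/-- The backward greedy selection (chunks processed in decreasing order C,…,1). -/
noncomputable def SchedModel.backGreedy (M : SchedModel) (X : ℝ) : Finset ℕ :=
  M.backGreedyAux X M.C

namespace SchedModel

/-- Total bandwidth of the slots `1, …, τ`. -/
noncomputable def cumB (M : SchedModel) (τ : ℕ) : ℝ := ∑ j ∈ Finset.Icc 1 τ, M.B j

/-- The number of chunks that fit into the playback buffer. -/
noncomputable def cap (M : SchedModel) : ℕ := ⌊M.Bm / M.L⌋₊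

/-- The counting bounds on index intervals that characterize feasibility of `S`. -/
def IntervalBounds (M : SchedModel) (X : ℝ) (S : Finset ℕ) : Prop :=
  ∀ τ σ, τ ≤ σ →
    X * ((S.filter (fun i => τ < M.t i ∧ M.d i ≤ σ)).card : ℝ) ≤ M.cumB σ - M.cumB τ ∧
    X * ((S.filter (fun i => τ < M.d i ∧ M.d i ≤ σ)).card : ℝ)
      ≤ M.cumB σ - M.cumB τ + M.cap * X

lemma mul_le_Bm_iff (M : SchedModel) (n : ℕ) : M.L * (n : ℝ) ≤ M.Bm ↔ n ≤ M.cap := by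
  unfold cap
  rw [Nat.le_floor_iff (div_nonneg M.hBm.le M.hL.le), le_div_iff₀ M.hL, mul_comm]

lemma cumB_succ (M : SchedModel) (τ : ℕ) : M.cumB (τ + 1) = M.cumB τ + M.B (τ + 1) := by
  unfold cumB
  rw [Finset.sum_Icc_succ_top (by omega)]

lemma cumB_mono (M : SchedModel) : Monotone M.cumB :=
  monotone_nat_of_le_succ fun n => by rw [cumB_succ]; linarith [M.hB (n + 1)]

/-! ### Necessity of the interval bounds -/

/-- Chunks that are not started at time `τ` and are due by `σ` are downloaded entirely in the slots
`τ+1, …, σ`. -/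
lemma work_le (M : SchedModel) {X : ℝ} {S Q : Finset ℕ} {z : ℕ → ℕ → ℝ}
    (hS : S ⊆ Finset.Icc 1 M.C)
    (hz : M.IsSchedule (fun i => if i ∈ S then X else 0) z) {τ σ : ℕ} (hτσ : τ ≤ σ)
    (hQS : Q ⊆ S) (hQd : ∀ i ∈ Q, M.d i ≤ σ)
    (hQ0 : ∀ i ∈ Q, ∑ j ∈ Finset.Icc 1 τ, z i j = 0) :
    X * (Q.card : ℝ) ≤ M.cumB σ - M.cumB τ := by
  obtain ⟨h0, hw, hs, hb, -⟩ := hz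
  have key : ∀ σ, τ ≤ σ → ∑ i ∈ Q, (∑ j ∈ Finset.Icc 1 σ, z i j) ≤ M.cumB σ - M.cumB τ := by
    intro σ hσ
    induction σ, hσ using Nat.le_induction with
    | base => rw [Finset.sum_eq_zero hQ0]; simp
    | succ n hn ih =>
      have h1 : ∑ i ∈ Q, (∑ j ∈ Finset.Icc 1 (n + 1), z i j)
          = ∑ i ∈ Q, (∑ j ∈ Finset.Icc 1 n, z i j) + ∑ i ∈ Q, z i (n + 1) := by
        rw [← Finset.sum_add_distrib]
        exact Finset.sum_congr rfl fun i _ => Finset.sum_Icc_succ_top (by omega) _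
      have h2 : ∑ i ∈ Q, z i (n + 1) ≤ ∑ i ∈ Finset.Icc 1 M.C, z i (n + 1) :=
        Finset.sum_le_sum_of_subset_of_nonneg (hQS.trans hS) fun i _ _ => h0 i _
      have h3 := hb (n + 1)
      rw [h1, cumB_succ]
      linarith
  have h4 : ∑ i ∈ Q, (∑ j ∈ Finset.Icc 1 σ, z i j) = ∑ i ∈ Q, X := by
    refine Finset.sum_congr rfl fun i hi => ?_
    have h5 := hs i (hS (hQS hi))
    simp only [if_pos (hQS hi)] at h5
    rw [← h5]
    symm
    refine Finset.sum_subset (Finset.Icc_subset_Icc_right (hQd i hi)) fun j hj hj' => ?_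
    refine hw i j (Or.inr ?_)
    simp only [Finset.mem_Icc] at hj hj'
    omega
  have h6 := key σ hτσ
  rw [h4, Finset.sum_const, nsmul_eq_mul] at h6
  linarith

lemma intervalBounds_of_feasible (M : SchedModel) {X : ℝ} (hX : 0 < X) {S : Finset ℕ}
    (hS : S ⊆ Finset.Icc 1 M.C) (hF : M.FeasibleSet X S) : M.IntervalBounds X S := by
  obtain ⟨z, hz⟩ := hF
  intro τ σ hτσ
  constructor
  · refine M.work_le hS hz hτσ (Finset.filter_subset _ _) (fun i hi => ?_) (fun i hi => ?_)
    · exact (Finset.mem_filter.1 hi).2.2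
    · have := (Finset.mem_filter.1 hi).2.1
      refine Finset.sum_eq_zero fun j hj => hz.2.1 i j (Or.inl ?_)
      simp only [Finset.mem_Icc] at hj
      omega
  · set U := S.filter (fun i => τ < M.d i ∧ M.d i ≤ σ) with hU
    set Q := U.filter (fun i => ∑ j ∈ Finset.Icc 1 τ, z i j = 0) with hQ
    set R := U.filter (fun i => ¬ ∑ j ∈ Finset.Icc 1 τ, z i j = 0) with hR
    have hcard : U.card = Q.card + R.card := (Finset.card_filter_add_card_filter_not _).symm
    have h1 : X * (Q.card : ℝ) ≤ M.cumB σ - M.cumB τ := by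
      refine M.work_le hS hz hτσ ((Finset.filter_subset _ _).trans (Finset.filter_subset _ _))
        (fun i hi => ?_) (fun i hi => ?_)
      · exact (Finset.mem_filter.1 (Finset.mem_filter.1 hi).1).2.2
      · exact (Finset.mem_filter.1 hi).2
    have h2 : R.card ≤ M.cap := by
      refine le_trans (Finset.card_le_card ?_) ((M.mul_le_Bm_iff _).1 (hz.2.2.2.2 τ))
      intro i hi
      obtain ⟨hiU, hne⟩ := Finset.mem_filter.1 hi
      obtain ⟨hiS, hd, -⟩ := Finset.mem_filter.1 hiU
      refine Finset.mem_filter.2 ⟨hS hiS, hd, ?_⟩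
      exact lt_of_le_of_ne (Finset.sum_nonneg fun j _ => hz.1 i j) (Ne.symm hne)
    have h3 : X * (R.card : ℝ) ≤ M.cap * X := by
      rw [mul_comm]
      exact mul_le_mul_of_nonneg_right (by exact_mod_cast h2) hX.le
    rw [hcard]
    push_cast
    linarith

/-! ### Sufficiency: the reversed-time schedule -/

/-- Number of elements of `S` above `i`, that is, of chunks served before `i` in reversed time. -/
def rankAbove (S : Finset ℕ) (i : ℕ) : ℕ := (S.filter (fun k => i < k)).card

/-- When total work `w` has been done on the chunks of `S` in decreasing order of index, each of
size `X`, the chunk with `r` predecessors has received `clip X r w`. -/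
noncomputable def clip (X : ℝ) (r : ℕ) (w : ℝ) : ℝ := min (max (w - X * r) 0) X

lemma clip_mono (X : ℝ) (r : ℕ) : Monotone (clip X r) := fun a b h => by
  unfold clip
  gcongr

lemma clip_le (X : ℝ) (r : ℕ) (w : ℝ) : clip X r w ≤ X := min_le_right _ _

lemma clip_eq_zero {X : ℝ} (hX : 0 < X) {r : ℕ} {w : ℝ} (h : w ≤ X * r) : clip X r w = 0 := by
  unfold clip
  rw [max_eq_right (by linarith), min_eq_left hX.le]

lemma clip_eq_self {X : ℝ} {r : ℕ} {w : ℝ} (h : X * (r + 1) ≤ w) : clip X r w = X := by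
  unfold clip
  exact min_eq_right (le_max_of_le_left (by linarith))

lemma sum_clip {X : ℝ} (hX : 0 < X) {w : ℝ} (hw : 0 ≤ w) (S : Finset ℕ) :
    ∑ i ∈ S, clip X (rankAbove S i) w = min w (X * S.card) := by
  induction S using Finset.induction_on_min with
  | empty => simp [hw]
  | insert a s ha ih =>
    have has : a ∉ s := fun h => lt_irrefl _ (ha a h)
    have h1 : rankAbove (insert a s) a = s.card := by
      unfold rankAbove
      rw [Finset.filter_insert, if_neg (lt_irrefl a), Finset.filter_true_of_mem ha]
    have h2 : ∀ i ∈ s, rankAbove (insert a s) i = rankAbove s i := by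
      intro i hi
      unfold rankAbove
      rw [Finset.filter_insert, if_neg (not_lt.2 (ha i hi).le)]
    rw [Finset.sum_insert has, Finset.card_insert_of_notMem has, h1,
      Finset.sum_congr rfl fun i hi => by rw [h2 i hi], ih]
    unfold clip
    push_cast
    rcases le_total w (X * s.card) with h | h
    · rw [min_eq_left h, max_eq_right (by linarith), min_eq_left hX.le, min_eq_left (by linarith)]
      ring
    · rw [min_eq_right h, max_eq_left (by linarith)]
      rcases le_total (w - X * s.card) X with h' | h'
      · rw [min_eq_left h', min_eq_left (by linarith)]; ring
      · rw [min_eq_right h', min_eq_right (by linarith)]; ring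

/-- Work that becomes available in reversed time before slot `τ`: the size of all chunks of `S`
with deadline after `τ`. -/
noncomputable def arr (M : SchedModel) (X : ℝ) (S : Finset ℕ) (τ : ℕ) : ℝ :=
  X * ((S.filter (fun i => τ < M.d i)).card : ℝ)

/-- Work done in the slots after `τ` by the non-idling reversed-time policy; the infimum is
attained at a `k` such that the backlog is empty at time `τ + k` and the slots `τ+1, …, τ+k` are
used in full. -/
noncomputable def work (M : SchedModel) (X : ℝ) (S : Finset ℕ) (τ : ℕ) : ℝ :=
  ⨅ k : ℕ, (M.cumB (τ + k) - M.cumB τ + M.arr X S (τ + k))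


lemma arr_nonneg {M : SchedModel} {X : ℝ} (hX : 0 < X) (S : Finset ℕ) (τ : ℕ) :
    0 ≤ M.arr X S τ := mul_nonneg hX.le (Nat.cast_nonneg _)

lemma work_term_nonneg (M : SchedModel) {X : ℝ} (hX : 0 < X) (S : Finset ℕ) (τ k : ℕ) :
    0 ≤ M.cumB (τ + k) - M.cumB τ + M.arr X S (τ + k) := by
  have h1 := M.cumB_mono (Nat.le_add_right τ k)
  have h2 := arr_nonneg (M := M) hX S (τ + k)
  linarith

lemma work_le_term (M : SchedModel) {X : ℝ} (hX : 0 < X) (S : Finset ℕ) (τ k : ℕ) :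
    M.work X S τ ≤ M.cumB (τ + k) - M.cumB τ + M.arr X S (τ + k) :=
  ciInf_le ⟨0, by rintro _ ⟨k, rfl⟩; exact M.work_term_nonneg hX S τ k⟩ k

lemma work_nonneg (M : SchedModel) {X : ℝ} (hX : 0 < X) (S : Finset ℕ) (τ : ℕ) :
    0 ≤ M.work X S τ := le_ciInf fun k => M.work_term_nonneg hX S τ k

lemma work_le_arr (M : SchedModel) {X : ℝ} (hX : 0 < X) (S : Finset ℕ) (τ : ℕ) :
    M.work X S τ ≤ M.arr X S τ := by
  simpa using M.work_le_term hX S τ 0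

lemma work_le_succ (M : SchedModel) {X : ℝ} (hX : 0 < X) (S : Finset ℕ) (τ : ℕ) :
    M.work X S τ - M.work X S (τ + 1) ≤ M.B (τ + 1) := by
  have : M.work X S τ - M.B (τ + 1) ≤ M.work X S (τ + 1) := by
    refine le_ciInf fun k => ?_
    have h := M.work_le_term hX S τ (k + 1)
    rw [show τ + (k + 1) = τ + 1 + k by ring] at h
    rw [cumB_succ M τ]
    linarith
  linarith

lemma work_succ_le (M : SchedModel) {X : ℝ} (hX : 0 < X) (S : Finset ℕ) (τ : ℕ) :
    M.work X S (τ + 1) ≤ M.work X S τ := by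
  refine le_ciInf fun k => ?_
  cases k with
  | zero =>
    have h1 := M.work_le_arr hX S (τ + 1)
    have h2 : M.arr X S (τ + 1) ≤ M.arr X S τ := by
      unfold arr
      refine mul_le_mul_of_nonneg_left ?_ hX.le
      exact_mod_cast Finset.card_le_card (Finset.monotone_filter_right S fun i _ hi => by omega)
    simpa using h1.trans h2
  | succ k =>
    have h := M.work_le_term hX S (τ + 1) k
    rw [show τ + 1 + k = τ + (k + 1) by ring] at h
    have := M.cumB_mono (Nat.le_succ τ)
    simp only [Nat.succ_eq_add_one] at this
    linarith

lemma card_release_le_work (M : SchedModel) {X : ℝ} (hX : 0 < X) {S : Finset ℕ}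
    (hI : M.IntervalBounds X S) (τ : ℕ) :
    X * ((S.filter (fun i => τ < M.t i)).card : ℝ) ≤ M.work X S τ := by
  refine le_ciInf fun k => ?_
  have h1 := (hI τ (τ + k) (by omega)).1
  have h2 : (S.filter (fun i => τ < M.t i)).card ≤
      (S.filter (fun i => τ < M.t i ∧ M.d i ≤ τ + k)).card
        + (S.filter (fun i => τ + k < M.d i)).card := by
    refine le_trans (Finset.card_le_card ?_) (Finset.card_union_le _ _)
    intro i hi
    simp only [Finset.mem_filter, Finset.mem_union] at hi ⊢
    have := hi.1
    rcases le_or_gt (M.d i) (τ + k) with h | h <;> tauto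
  have h3 := mul_le_mul_of_nonneg_left (Nat.cast_le (α := ℝ).2 h2) hX.le
  unfold arr
  push_cast at h3
  linarith

lemma arr_sub_cap_le_work (M : SchedModel) {X : ℝ} (hX : 0 < X) {S : Finset ℕ}
    (hI : M.IntervalBounds X S) (τ : ℕ) :
    M.arr X S τ - M.cap * X ≤ M.work X S τ := by
  refine le_ciInf fun k => ?_
  have h1 := (hI τ (τ + k) (by omega)).2
  have h2 : (S.filter (fun i => τ < M.d i)).card ≤
      (S.filter (fun i => τ < M.d i ∧ M.d i ≤ τ + k)).card
        + (S.filter (fun i => τ + k < M.d i)).card := by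
    refine le_trans (Finset.card_le_card ?_) (Finset.card_union_le _ _)
    intro i hi
    simp only [Finset.mem_filter, Finset.mem_union] at hi ⊢
    have := hi.1
    rcases le_or_gt (M.d i) (τ + k) with h | h <;> tauto
  have h3 := mul_le_mul_of_nonneg_left (Nat.cast_le (α := ℝ).2 h2) hX.le
  unfold arr
  push_cast at h3
  linarith


/-- Amount of chunk `i` downloaded after slot `τ` in the reversed-time schedule. -/
noncomputable def served (M : SchedModel) (X : ℝ) (S : Finset ℕ) (i τ : ℕ) : ℝ :=
  if i ∈ S then clip X (rankAbove S i) (M.work X S τ) else 0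

/-- The reversed-time schedule. Slot `0` lies before every window and carries no download. -/
noncomputable def revSchedule (M : SchedModel) (X : ℝ) (S : Finset ℕ) (i j : ℕ) : ℝ :=
  match j with
  | 0 => 0
  | j + 1 => M.served X S i j - M.served X S i (j + 1)

lemma sum_revSchedule (M : SchedModel) (X : ℝ) (S : Finset ℕ) (i τ : ℕ) :
    ∑ j ∈ Finset.Icc 1 τ, M.revSchedule X S i j = M.served X S i 0 - M.served X S i τ := by
  induction τ with
  | zero => simp
  | succ n ih =>
    rw [Finset.sum_Icc_succ_top (by omega), ih]
    simp only [revSchedule]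
    ring

/-- A chunk receives nothing after its deadline: the work available after `τ ≥ d i` belongs to
chunks above `i`. -/
lemma served_eq_zero (M : SchedModel) {X : ℝ} (hX : 0 < X) (S : Finset ℕ) {i τ : ℕ}
    (h : M.d i ≤ τ) : M.served X S i τ = 0 := by
  unfold served
  split_ifs with hi
  · refine clip_eq_zero hX ((M.work_le_arr hX S τ).trans ?_)
    unfold arr rankAbove
    refine mul_le_mul_of_nonneg_left ?_ hX.le
    refine Nat.cast_le.2 (Finset.card_le_card (Finset.monotone_filter_right S fun k _ hk => ?_))
    by_contra hik
    have := M.dmono (not_lt.1 hik)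
    omega
  · rfl

/-- Nothing is left to download before the window opens: a chunk of `S` receives all of its size
after any slot `τ < t i`. -/
lemma served_eq_full (M : SchedModel) {X : ℝ} (hX : 0 < X) {S : Finset ℕ}
    (hI : M.IntervalBounds X S) {i τ : ℕ} (h : τ < M.t i) :
    M.served X S i τ = if i ∈ S then X else 0 := by
  unfold served
  split_ifs with hi
  · refine clip_eq_self (le_trans ?_ (M.card_release_le_work hX hI τ))
    refine mul_le_mul_of_nonneg_left ?_ hX.le
    have h1 : insert i (S.filter (fun k => i < k)) ⊆ S.filter (fun k => τ < M.t k) := by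
      intro k hk
      rcases Finset.mem_insert.1 hk with rfl | hk
      · exact Finset.mem_filter.2 ⟨hi, h⟩
      · obtain ⟨hkS, hik⟩ := Finset.mem_filter.1 hk
        exact Finset.mem_filter.2 ⟨hkS, lt_of_lt_of_le h (M.tmono hik.le)⟩
    have h2 := Finset.card_le_card h1
    rw [Finset.card_insert_of_notMem (by simp)] at h2
    unfold rankAbove
    exact_mod_cast h2
  · rfl

lemma served_succ_le (M : SchedModel) {X : ℝ} (hX : 0 < X) (S : Finset ℕ) (i τ : ℕ) :
    M.served X S i (τ + 1) ≤ M.served X S i τ := by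
  unfold served
  split_ifs
  · exact clip_mono _ _ (M.work_succ_le hX S τ)
  · exact le_rfl

lemma sum_served (M : SchedModel) {X : ℝ} (hX : 0 < X) {S : Finset ℕ}
    (hS : S ⊆ Finset.Icc 1 M.C) (τ : ℕ) :
    ∑ i ∈ Finset.Icc 1 M.C, M.served X S i τ = M.work X S τ := by
  have h1 : ∑ i ∈ Finset.Icc 1 M.C, M.served X S i τ = ∑ i ∈ S, M.served X S i τ := by
    refine (Finset.sum_subset hS fun i _ hi => ?_).symm
    simp [served, hi]
  rw [h1, Finset.sum_congr rfl fun i hi => by rw [served, if_pos hi],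
    sum_clip hX (M.work_nonneg hX S τ), min_eq_left]
  refine (M.work_le_arr hX S τ).trans ?_
  unfold arr
  exact mul_le_mul_of_nonneg_left (Nat.cast_le.2 (Finset.card_filter_le _ _)) hX.le

lemma feasible_of_intervalBounds (M : SchedModel) {X : ℝ} (hX : 0 < X) {S : Finset ℕ}
    (hS : S ⊆ Finset.Icc 1 M.C) (hI : M.IntervalBounds X S) : M.FeasibleSet X S := by
  refine ⟨M.revSchedule X S, ?_, ?_, ?_, ?_, ?_⟩
  · rintro i (_ | j)
    · exact le_rfl
    · exact sub_nonneg.2 (M.served_succ_le hX S i j)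
  · rintro i (_ | j) h
    · rfl
    · simp only [revSchedule]
      rcases h with h | h
      · rw [M.served_eq_full hX hI h, M.served_eq_full hX hI (show j < M.t i by omega), sub_self]
      · rw [M.served_eq_zero hX S h.le, M.served_eq_zero hX S (show M.d i ≤ j by omega), sub_self]
  · intro i _
    rw [sum_revSchedule, M.served_eq_zero hX S le_rfl, sub_zero]
    exact M.served_eq_full hX hI (M.ht i)
  · rintro (_ | j)
    · simpa [revSchedule] using M.hB 0
    · simp only [revSchedule]
      rw [Finset.sum_sub_distrib, M.sum_served hX hS, M.sum_served hX hS]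
      exact M.work_le_succ hX S j
  · intro τ
    rw [mul_le_Bm_iff]
    set V := (Finset.Icc 1 M.C).filter
      (fun i => τ < M.d i ∧ 0 < ∑ j ∈ Finset.Icc 1 τ, M.revSchedule X S i j) with hV
    rcases V.eq_empty_or_nonempty with hVe | hVn
    · rw [hVe]; simp
    have hmem : ∀ i ∈ V, i ∈ S ∧ τ < M.d i ∧ M.work X S τ < X * (rankAbove S i + 1) := by
      intro i hi
      obtain ⟨-, hd, hpos⟩ := Finset.mem_filter.1 hi
      rw [sum_revSchedule, M.served_eq_full hX hI (M.ht i)] at hpos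
      by_cases hiS : i ∈ S
      · refine ⟨hiS, hd, ?_⟩
        by_contra hcon
        rw [served, if_pos hiS, if_pos hiS, clip_eq_self (not_lt.1 hcon)] at hpos
        linarith
      · simp [served, hiS] at hpos
    -- The chunks not yet complete in reversed time lie at or below the largest of them, `m`.
    obtain ⟨hmS, hmd, hmw⟩ := hmem _ (V.max'_mem hVn)
    set m := V.max' hVn
    have h1 : V.card + rankAbove S m ≤ (S.filter (fun i => τ < M.d i)).card := by
      unfold rankAbove
      rw [← Finset.card_union_of_disjoint]
      · refine Finset.card_le_card (Finset.union_subset (fun i hi => ?_) (fun i hi => ?_))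
        · exact Finset.mem_filter.2 ⟨(hmem i hi).1, (hmem i hi).2.1⟩
        · obtain ⟨hiS, hmi⟩ := Finset.mem_filter.1 hi
          exact Finset.mem_filter.2 ⟨hiS, lt_of_lt_of_le hmd (M.dmono hmi.le)⟩
      · refine Finset.disjoint_left.2 fun i hi hi' => ?_
        have := V.le_max' i hi
        have := (Finset.mem_filter.1 hi').2
        omega
    have h2 := M.arr_sub_cap_le_work hX hI τ
    have h3 := mul_le_mul_of_nonneg_left (Nat.cast_le (α := ℝ).2 h1) hX.le
    unfold arr at h2
    push_cast at h3
    have h4 : X * (V.card : ℝ) < X * (M.cap + 1) := by linarith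
    have h5 : (V.card : ℝ) < (M.cap : ℝ) + 1 := lt_of_mul_lt_mul_left h4 hX.le
    exact Nat.lt_succ_iff.1 (by exact_mod_cast h5)

/-! ### The exchange step -/

lemma IntervalBounds.mono {M : SchedModel} {X : ℝ} (hX : 0 < X) {S T : Finset ℕ} (hST : S ⊆ T)
    (hT : M.IntervalBounds X T) : M.IntervalBounds X S := by
  intro τ σ h
  obtain ⟨h1, h2⟩ := hT τ σ h
  refine ⟨le_trans ?_ h1, le_trans ?_ h2⟩ <;>
  exact mul_le_mul_of_nonneg_left
    (Nat.cast_le.2 (Finset.card_le_card (Finset.filter_subset_filter _ hST))) hX.le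

/-- Exchanging `k` for `i` on an interval `p`: the count does not exceed that of `S` if `p`
contains `k` or misses `i`, and that of `G` otherwise. -/
lemma card_filter_exchange {S G : Finset ℕ} {i k : ℕ} (p : ℕ → Prop) [DecidablePred p]
    (hp : ∀ a b c, a ≤ b → b ≤ c → p a → p c → p b)
    (hk : k ∈ S) (hki : k < i) (hmax : ∀ l ∈ S, l < i → l ≤ k)
    (hi : i ∉ S) (hiG : i ∈ G) (hag : ∀ l ∈ S, i < l → l ∈ G) :
    ((insert i (S.erase k)).filter p).card ≤ (S.filter p).card ∨
    ((insert i (S.erase k)).filter p).card ≤ (G.filter p).card := by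
  by_cases hpi : p i
  · by_cases hpk : p k
    · left
      rw [Finset.filter_insert, if_pos hpi, Finset.filter_erase]
      have hkf : k ∈ S.filter p := Finset.mem_filter.2 ⟨hk, hpk⟩
      refine (Finset.card_insert_le _ _).trans ?_
      rw [Finset.card_erase_add_one hkf]
    · right
      refine Finset.card_le_card fun l hl => ?_
      obtain ⟨hl, hpl⟩ := Finset.mem_filter.1 hl
      refine Finset.mem_filter.2 ⟨?_, hpl⟩
      rcases Finset.mem_insert.1 hl with rfl | hl
      · exact hiG
      · obtain ⟨-, hlS⟩ := Finset.mem_erase.1 hl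
        rcases lt_trichotomy l i with h | h | h
        · exact absurd (hp l k i (hmax l hlS h) hki.le hpl hpi) hpk
        · exact h ▸ hiG
        · exact hag l hlS h
  · left
    rw [Finset.filter_insert, if_neg hpi]
    exact Finset.card_le_card (Finset.filter_subset_filter _ (Finset.erase_subset _ _))

lemma IntervalBounds.exchange {M : SchedModel} {X : ℝ} (hX : 0 < X) {S G : Finset ℕ} {i k : ℕ}
    (hS : M.IntervalBounds X S) (hG : M.IntervalBounds X G)
    (hk : k ∈ S) (hki : k < i) (hmax : ∀ l ∈ S, l < i → l ≤ k)
    (hi : i ∉ S) (hiG : i ∈ G) (hag : ∀ l ∈ S, i < l → l ∈ G) :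
    M.IntervalBounds X (insert i (S.erase k)) := by
  intro τ σ h
  obtain ⟨s1, s2⟩ := hS τ σ h
  obtain ⟨g1, g2⟩ := hG τ σ h
  constructor
  · rcases card_filter_exchange (fun i => τ < M.t i ∧ M.d i ≤ σ)
      (fun a b c hab hbc ha hc =>
        ⟨ha.1.trans_le (M.tmono hab), (M.dmono hbc).trans hc.2⟩) hk hki hmax hi hiG hag with h | h
    · exact (mul_le_mul_of_nonneg_left (Nat.cast_le.2 h) hX.le).trans s1
    · exact (mul_le_mul_of_nonneg_left (Nat.cast_le.2 h) hX.le).trans g1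
  · rcases card_filter_exchange (fun i => τ < M.d i ∧ M.d i ≤ σ)
      (fun a b c hab hbc ha hc =>
        ⟨ha.1.trans_le (M.dmono hab), (M.dmono hbc).trans hc.2⟩) hk hki hmax hi hiG hag with h | h
    · exact (mul_le_mul_of_nonneg_left (Nat.cast_le.2 h) hX.le).trans s2
    · exact (mul_le_mul_of_nonneg_left (Nat.cast_le.2 h) hX.le).trans g2

/-- A feasible set that agrees with the greedy selection above `m` has at most its weight. -/
lemma weight_le_of_agree (M : SchedModel) {X : ℝ} (hX : 0 < X) {β : ℝ} (hβ : 1 ≤ β) (m : ℕ) :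
    m ≤ M.C → ∀ S : Finset ℕ, S ⊆ Finset.Icc 1 M.C → M.FeasibleSet X S →
      S.filter (fun l => m < l) = M.backGreedyAux X (M.C - m) →
      ∑ i ∈ S, β ^ i * X ≤ ∑ i ∈ M.backGreedy X, β ^ i * X := by
  induction m with
  | zero =>
    intro _ S hS _ hag
    have hpos : ∀ l ∈ S, 0 < l := fun l hl => (Finset.mem_Icc.1 (hS hl)).1
    rw [Finset.filter_true_of_mem hpos] at hag
    rw [backGreedy, hag, Nat.sub_zero]
  | succ m ih =>
    intro hm S hS hF hag
    have ih := ih (by omega)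
    set G := M.backGreedyAux X (M.C - (m + 1)) with hGdef
    have hstep : M.backGreedyAux X (M.C - m)
        = if M.FeasibleSet X (insert (m + 1) G) then insert (m + 1) G else G := by
      rw [show M.C - m = (M.C - (m + 1)) + 1 by omega, backGreedyAux]
      simp only [show M.C - (M.C - (m + 1)) = m + 1 by omega, ← hGdef]
    have hGS : G ⊆ S := hag ▸ Finset.filter_subset _ _
    have hmemG : ∀ l, l ∈ G ↔ l ∈ S ∧ m + 1 < l := fun l => by rw [← hag, Finset.mem_filter]
    have hmI : m + 1 ∈ Finset.Icc 1 M.C := Finset.mem_Icc.2 ⟨by omega, hm⟩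
    have hinsI : insert (m + 1) G ⊆ Finset.Icc 1 M.C :=
      Finset.insert_subset hmI (hGS.trans hS)
    have hIS := M.intervalBounds_of_feasible hX hS hF
    by_cases hadd : M.FeasibleSet X (insert (m + 1) G)
    · rw [if_pos hadd] at hstep
      by_cases hmS : m + 1 ∈ S
      · refine ih S hS hF ?_
        rw [hstep]
        ext l
        simp only [Finset.mem_filter, Finset.mem_insert, hmemG]
        constructor
        · rintro ⟨h1, h2⟩
          rcases eq_or_lt_of_le (Nat.succ_le_of_lt h2) with h | h
          · exact Or.inl h.symm
          · exact Or.inr ⟨h1, h⟩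
        · rintro (rfl | ⟨h1, h2⟩)
          · exact ⟨hmS, by omega⟩
          · exact ⟨h1, by omega⟩
      · have hIG := M.intervalBounds_of_feasible hX hinsI hadd
        rcases (S.filter (fun l => l < m + 1)).eq_empty_or_nonempty with he | hne
        · -- Nothing lies below `m + 1`, so `S` is part of the greedy selection made so far.
          have hSG : S = G := by
            refine Finset.Subset.antisymm (fun l hl => (hmemG l).2 ⟨hl, ?_⟩) hGS
            by_contra hcon
            have hne : l ≠ m + 1 := fun h => hmS (h ▸ hl)
            have : l ∈ S.filter (fun l => l < m + 1) :=
              Finset.mem_filter.2 ⟨hl, by omega⟩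
            rw [he] at this
            simp at this
          refine le_trans ?_ (ih (insert (m + 1) G) hinsI hadd ?_)
          · rw [hSG]
            refine Finset.sum_le_sum_of_subset_of_nonneg (Finset.subset_insert _ _)
              fun l _ _ => ?_
            positivity
          · rw [hstep, Finset.filter_true_of_mem]
            intro l hl
            rcases Finset.mem_insert.1 hl with rfl | hl
            · omega
            · have := ((hmemG l).1 hl).2
              omega
        · obtain ⟨hkS, hkm⟩ := Finset.mem_filter.1 (Finset.max'_mem _ hne)
          have hmax : ∀ l ∈ S, l < m + 1 → l ≤ (S.filter (fun l => l < m + 1)).max' hne :=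
            fun l hl hlm => Finset.le_max' _ _ (Finset.mem_filter.2 ⟨hl, hlm⟩)
          generalize (S.filter (fun l => l < m + 1)).max' hne = k at hkS hkm hmax
          have hS' : insert (m + 1) (S.erase k) ⊆ Finset.Icc 1 M.C :=
            Finset.insert_subset hmI ((Finset.erase_subset _ _).trans hS)
          have hI' := hIS.exchange hX hIG hkS hkm hmax hmS (Finset.mem_insert_self _ _)
            fun l hl hml => Finset.mem_insert_of_mem ((hmemG l).2 ⟨hl, hml⟩)
          refine le_trans ?_ (ih _ hS' (M.feasible_of_intervalBounds hX hS' hI') ?_)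
          · rw [Finset.sum_insert fun h => hmS (Finset.mem_of_mem_erase h),
              ← Finset.add_sum_erase S _ hkS]
            gcongr
          · rw [hstep]
            ext l
            simp only [Finset.mem_filter, Finset.mem_insert, Finset.mem_erase, hmemG]
            constructor
            · rintro ⟨rfl | ⟨-, h1⟩, h2⟩
              · exact Or.inl rfl
              · rcases eq_or_lt_of_le (Nat.succ_le_of_lt h2) with h | h
                · exact Or.inl h.symm
                · exact Or.inr ⟨h1, h⟩
            · rintro (rfl | ⟨h1, h2⟩)
              · exact ⟨Or.inl rfl, by omega⟩
              · exact ⟨Or.inr ⟨by omega, h1⟩, by omega⟩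
    · rw [if_neg hadd] at hstep
      have hmS : m + 1 ∉ S := fun h => hadd
        (M.feasible_of_intervalBounds hX hinsI (hIS.mono hX (Finset.insert_subset h hGS)))
      refine ih S hS hF ?_
      rw [hstep]
      ext l
      simp only [Finset.mem_filter, hmemG]
      constructor
      · rintro ⟨h1, h2⟩
        have : l ≠ m + 1 := fun h => hmS (h ▸ h1)
        exact ⟨h1, by omega⟩
      · rintro ⟨h1, h2⟩
        exact ⟨h1, by omega⟩

end SchedModel

/-- Lemma 2: for any β ≥ 1, the backward greedy selection maximizes
the geometrically weighted sum of fetched chunk sizes over feasible selections. -/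
theorem backward_greedy_weighted_optimal (M : SchedModel) (X : ℝ) (hX : 0 < X)
    (β : ℝ) (hβ : 1 ≤ β) :
    ∀ S : Finset ℕ, S ⊆ Finset.Icc 1 M.C → M.FeasibleSet X S →
      ∑ i ∈ S, β ^ i * X ≤ ∑ i ∈ M.backGreedy X, β ^ i * X := by
  intro S hS hF
  refine M.weight_le_of_agree hX hβ M.C le_rfl S hS hF ?_
  rw [Nat.sub_self, SchedModel.backGreedyAux, Finset.filter_eq_empty_iff]
  intro l hl
  exact not_lt.2 (Finset.mem_Icc.1 (hS hl)).2
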